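/- arXiv:0804.3209 — 2 statements merged into one kernel-verified Lean document; each statement's English description precedes it below -/
import Mathlib

section
/- Let ρ : L∞ → ℝ be a coherent risk measure with dual representation ρ(X) = sup_{f∈H} E[−fX] for a convex, σ(L¹,L∞)-closed set H of densities. If for every X ∈ L∞ the supremum in the representation is attained, then H is weakly compact in L¹. -/
open MeasureTheory

open Bornology Filter Set Topology
open scoped ENNReal NNReal Pointwise

/-!
If `H` were not uniformly integrable, there would be a decreasing sequence of events `B n` of
probability tending to `0` such that `sup_{f ∈ H} E[f 1_{B n}]` stays above some `ε > 0`. For each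
fixed `f`, however, `E[f 1_{B n}]` tends to `0`, and since the supremum over `H` is attained in
every direction of `L∞`, Simons' inequality (`exists_mem_convexHull_forall_lt`) upgrades this
pointwise smallness to uniform smallness at a convex combination of the `1_{B n}`. By monotonicity
in `n` a single `B n` then does as well, a contradiction.

A uniformly integrable set lies, up to any `ε` in `L¹` norm, in the image of a ball of the Hilbert
space `L²`, which is weakly compact. So every weak-star limit of `H` in the bidual of `L¹` is within
`ε` of `L¹` for every `ε`, hence lies in `L¹`, and the weak closure of `H` is weakly compact.
-/

section Simons

variable {V : Type*} [NormedAddCommGroup V] [NormedSpace ℝ V] {p : V → ℝ}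

lemma exists_add_half_smul {C C' : Set V} (hp : ConvexOn ℝ univ p)
    (hC : Convex ℝ C) (hne : C.Nonempty) (hC' : C' ⊆ C) {x : V} {t d d' : ℝ} (ht : 0 < t)
    (hd : d' < d) (h : ∀ y ∈ C, p x + d * t ≤ p (x + t • y)) :
    ∃ y ∈ C, ∀ z ∈ C', p (x + (t / 2) • y) + d' * (t / 2) ≤
      p (x + (t / 2) • y + (t / 2) • z) := by
  have hbdd : BddBelow ((fun y => p (x + t • y)) '' C) := ⟨p x + d * t, forall_mem_image.2 h⟩
  have hle_inf : p x + d * t ≤ sInf ((fun y => p (x + t • y)) '' C) :=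
    le_csInf (hne.image _) (forall_mem_image.2 h)
  obtain ⟨y, hy, hy_lt⟩ : ∃ y ∈ C,
      p (x + t • y) < sInf ((fun y => p (x + t • y)) '' C) + (d - d') * t := by
    simpa only [exists_mem_image] using
      exists_lt_of_csInf_lt (hne.image _) (lt_add_of_pos_right _ (mul_pos (sub_pos.2 hd) ht))
  -- Convexity gives at most half of the increment of `p` along `t • y` to the first half step, and
  -- the near-minimality of `y` passes the rest on to every direction `z` of the second one.
  refine ⟨y, hy, fun z hz => ?_⟩
  have hmid : p (x + (t / 2) • y) ≤ 2⁻¹ * p x + 2⁻¹ * p (x + t • y) := by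
    have := hp.2 (mem_univ x) (mem_univ (x + t • y)) (by norm_num : (0 : ℝ) ≤ 2⁻¹)
      (by norm_num : (0 : ℝ) ≤ 2⁻¹) (by norm_num)
    rwa [show (2⁻¹ : ℝ) • x + (2⁻¹ : ℝ) • (x + t • y) = x + (t / 2) • y by module] at this
  have hinf_le : sInf ((fun y => p (x + t • y)) '' C) ≤ p (x + (t / 2) • y + (t / 2) • z) := by
    refine csInf_le hbdd ⟨(2⁻¹ : ℝ) • y + (2⁻¹ : ℝ) • z,
      hC hy (hC' hz) (by norm_num) (by norm_num) (by norm_num), ?_⟩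
    exact congrArg p (by module)
  linarith

lemma exists_seq_nested {C : ℕ → Set V} (hp : ConvexOn ℝ univ p) (hanti : Antitone C)
    (hC : ∀ n, Convex ℝ (C n)) (hne : ∀ n, (C n).Nonempty) {c c' : ℝ} (hc : c' < c)
    (h : ∀ y ∈ C 0, p 0 + c ≤ p y) :
    ∃ x : ℕ → V, Antitone (fun n => x n +ᵥ (2⁻¹ : ℝ) ^ n • C n) ∧
      ∀ n, ∀ y ∈ C n, p (x n) + c' * 2⁻¹ ^ n ≤ p (x n + (2⁻¹ : ℝ) ^ n • y) := by
  let t : ℕ → ℝ := fun n => 2⁻¹ ^ n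
  let d : ℕ → ℝ := fun n => c' + (c - c') * t n
  have ht : ∀ n, 0 < t n := fun n => by positivity
  have ht_succ : ∀ n, t (n + 1) = t n / 2 := fun n => by simp only [t]; ring
  have hd : ∀ n, d (n + 1) < d n := fun n => by
    simp only [d, ht_succ]; nlinarith [ht n]
  let P : ℕ → V → Prop := fun n x => ∀ y ∈ C n, p x + d n * t n ≤ p (x + t n • y)
  have hstep : ∀ n x, P n x → ∃ y ∈ C n, P (n + 1) (x + t (n + 1) • y) := fun n x hx => by
    simp only [P, ht_succ]
    exact exists_add_half_smul hp (hC n) (hne n) (hanti n.le_succ) (ht n) (hd n) hx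
  choose! y hyC hyP using hstep
  let x : ℕ → V := fun n => Nat.rec 0 (fun n x => x + t (n + 1) • y n x) n
  have hx_succ : ∀ n, x (n + 1) = x n + t (n + 1) • y n (x n) := fun n => rfl
  have hxP : ∀ n, P n (x n) := fun n => by
    induction n with
    | zero => intro z hz; simpa [x, d, t] using h z hz
    | succ n ih => exact hyP n _ ih
  refine ⟨x, antitone_nat_of_succ_le fun n => ?_, fun n z hz => ?_⟩
  · rintro _ ⟨_, ⟨z, hz, rfl⟩, rfl⟩
    refine ⟨_, ⟨(2⁻¹ : ℝ) • y n (x n) + (2⁻¹ : ℝ) • z, hC n (hyC n _ (hxP n))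
      (hanti n.le_succ hz) (by norm_num) (by norm_num) (by norm_num), rfl⟩, ?_⟩
    simp only [vadd_eq_add, hx_succ, t, pow_succ]
    module
  · refine le_trans ?_ (hxP n z hz)
    have : 0 < (c - c') * t n := mul_pos (sub_pos.2 hc) (ht n)
    gcongr
    simp only [d]; linarith

lemma exists_forall_mem_closure [CompleteSpace V] {C : ℕ → Set V} (hC : Antitone C)
    (hne : ∀ n, (C n).Nonempty) (hbdd : IsBounded (C 0)) {x : ℕ → V} {t : ℕ → ℝ}
    (ht : Tendsto t atTop (𝓝 0)) (hanti : Antitone fun n => x n +ᵥ t n • C n) :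
    ∃ l, ∀ n, l ∈ closure (x n +ᵥ t n • C n) := by
  have hbdd' : ∀ n, IsBounded (x n +ᵥ t n • C n) := fun n =>
    ((hbdd.subset (hC n.zero_le)).smul₀ _).vadd _
  have hdiam : Tendsto (fun n => Metric.diam (closure (x n +ᵥ t n • C n))) atTop (𝓝 0) := by
    have hlim : Tendsto (fun n => ‖t n‖ * Metric.diam (C 0)) atTop (𝓝 0) := by
      simpa using ht.norm.mul_const (Metric.diam (C 0))
    refine squeeze_zero (fun n => Metric.diam_nonneg) (fun n => ?_) hlim
    rw [Metric.diam_closure, diam_vadd, diam_smul₀]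
    gcongr
    exact Metric.diam_mono (hC n.zero_le) hbdd
  have hinter : ∀ N, (⋂ n ≤ N, closure (x n +ᵥ t n • C n)).Nonempty := fun N =>
    ((hne N).smul_set.vadd_set).mono
      (subset_iInter₂ fun n hn => (hanti hn).trans subset_closure)
  simpa only [nonempty_iInter] using
    Metric.nonempty_iInter_of_nonempty_biInter (fun n => isClosed_closure)
      (fun n => (hbdd' n).closure) hinter hdiam

lemma exists_forall_exists_mem_closure [CompleteSpace V] {C : ℕ → Set V} (hp : ConvexOn ℝ univ p)
    (hcont : Continuous p) (hanti : Antitone C) (hC : ∀ n, Convex ℝ (C n))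
    (hne : ∀ n, (C n).Nonempty) (hbdd : IsBounded (C 0)) {c c' : ℝ} (hc : c' < c)
    (h : ∀ y ∈ C 0, p 0 + c ≤ p y) :
    ∃ l, ∀ n, ∃ x, ∃ t > (0 : ℝ), l ∈ closure (x +ᵥ t • C n) ∧ p x + c' * t ≤ p l := by
  obtain ⟨x, hxanti, hx⟩ := exists_seq_nested hp hanti hC hne hc h
  obtain ⟨l, hl⟩ := exists_forall_mem_closure hanti hne hbdd
    (tendsto_pow_atTop_nhds_zero_of_lt_one (by norm_num) (by norm_num)) hxanti
  refine ⟨l, fun n => ⟨x n, 2⁻¹ ^ n, by positivity, hl n, ?_⟩⟩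
  suffices hsub : x n +ᵥ (2⁻¹ : ℝ) ^ n • C n ⊆ {z | p (x n) + c' * 2⁻¹ ^ n ≤ p z} from
    closure_minimal hsub (isClosed_le continuous_const hcont) (hl n)
  rintro _ ⟨_, ⟨y, hy, rfl⟩, rfl⟩
  exact hx n y hy

variable {ι : Type*} {φ : ι → StrongDual ℝ V}

lemma convexOn_of_isLUB (hp : ∀ x, IsLUB (range fun i => φ i x) (p x)) : ConvexOn ℝ univ p := by
  refine ⟨convex_univ, fun x _ y _ a b ha hb _ => (hp _).2 (forall_mem_range.2 fun i => ?_)⟩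
  simp only [map_add, map_smul, smul_eq_mul]
  gcongr
  exacts [(hp x).1 (mem_range_self i), (hp y).1 (mem_range_self i)]

lemma continuous_of_isLUB [CompleteSpace V] (hp : ∀ x, IsLUB (range fun i => φ i x) (p x)) :
    Continuous p := by
  have hle : ∀ i x, φ i x ≤ p x := fun i x => (hp x).1 (mem_range_self i)
  obtain ⟨K, hK⟩ := banach_steinhaus (g := φ) fun x => ⟨max (p x) (p (-x)), fun i =>
    abs_le'.2 ⟨le_max_of_le_left (hle i x), le_max_of_le_right (by simpa using hle i (-x))⟩⟩
  refine (LipschitzWith.of_le_add_mul K.toNNReal fun x y => ?_).continuous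
  refine (hp x).2 (forall_mem_range.2 fun i => ?_)
  have hdiff : φ i (x - y) ≤ K.toNNReal * dist x y := by
    rw [dist_eq_norm]
    exact (le_abs_self _).trans
      ((φ i).le_of_opNorm_le ((hK i).trans (Real.le_coe_toNNReal K)) _)
  rw [map_sub] at hdiff
  linarith [hle i y]

theorem exists_mem_convexHull_forall_lt [CompleteSpace V]
    (hmax : ∀ x, ∃ i, ∀ j, φ j x ≤ φ i x) {e : ℕ → V} (he : IsBounded (range e)) {a b : ℝ}
    (hab : a < b) (ha : ∀ i, ∀ᶠ n in atTop, φ i (e n) ≤ a) :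
    ∃ y ∈ convexHull ℝ (range e), ∀ i, φ i y < b := by
  by_contra! hb
  choose m hm using hmax
  let p : V → ℝ := fun x => φ (m x) x
  have hp : ∀ x, IsLUB (range fun i => φ i x) (p x) := fun x =>
    IsGreatest.isLUB ⟨mem_range_self (m x), forall_mem_range.2 (hm x)⟩
  let C : ℕ → Set V := fun n => convexHull ℝ (e '' Ici n)
  have hC0 : C 0 = convexHull ℝ (range e) := by simp [C]
  obtain ⟨c, hac, hcb⟩ := exists_between hab
  obtain ⟨l, hl⟩ := exists_forall_exists_mem_closure (convexOn_of_isLUB hp)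
    (continuous_of_isLUB hp) (C := C)
    (fun _ _ hmn => convexHull_mono (image_mono (Ici_subset_Ici.2 hmn)))
    (fun n => convex_convexHull ℝ _) (fun n => (nonempty_Ici.image e).convexHull)
    (by rw [hC0]; exact isBounded_convexHull.2 he) hcb
    (fun y hy => by
      obtain ⟨i, hi⟩ := hb y (hC0 ▸ hy)
      simpa [p] using hi.trans (hm y i))
  obtain ⟨N, hN⟩ := eventually_atTop.1 (ha (m l))
  have hCN : C N ⊆ {y | φ (m l) y ≤ a} :=
    convexHull_min (forall_mem_image.2 hN) (convex_halfSpace_le (φ (m l)).isLinear a)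
  obtain ⟨x, t, ht, hlx, hpl⟩ := hl N
  have hle : φ (m l) l ≤ φ (m l) x + t * a := by
    suffices hsub : x +ᵥ t • C N ⊆ {z | φ (m l) z ≤ φ (m l) x + t * a} from
      closure_minimal hsub (isClosed_le (φ (m l)).continuous continuous_const) hlx
    rintro _ ⟨_, ⟨y, hy, rfl⟩, rfl⟩
    simpa [ht] using hCN hy
  have hx : φ (m l) x ≤ p x := hm x (m l)
  have hat : a * t < c * t := mul_lt_mul_of_pos_right hac ht
  simp only [p] at hpl hx
  linarith

theorem exists_forall_lt_of_antitone [CompleteSpace V]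
    (hmax : ∀ x, ∃ i, ∀ j, φ j x ≤ φ i x) {e : ℕ → V} (he : IsBounded (range e))
    (hanti : ∀ i, Antitone fun n => φ i (e n)) {a b : ℝ} (hab : a < b)
    (ha : ∀ i, ∀ᶠ n in atTop, φ i (e n) ≤ a) :
    ∃ n, ∀ i, φ i (e n) < b := by
  obtain ⟨y, hy, hyb⟩ := exists_mem_convexHull_forall_lt hmax he hab ha
  suffices h : convexHull ℝ (range e) ⊆ {y | ∃ n, ∀ i, φ i (e n) ≤ φ i y} by
    obtain ⟨n, hn⟩ := h hy
    exact ⟨n, fun i => (hn i).trans_lt (hyb i)⟩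
  refine convexHull_min (range_subset_iff.2 fun n => ⟨n, fun i => le_rfl⟩) ?_
  rintro x ⟨m, hm⟩ y ⟨n, hn⟩ s t hs ht hst
  refine ⟨max m n, fun i => ?_⟩
  calc φ i (e (max m n)) = s * φ i (e (max m n)) + t * φ i (e (max m n)) := by
        rw [← add_mul, hst, one_mul]
    _ ≤ s * φ i x + t * φ i y := by
        gcongr
        exacts [(hanti i (le_max_left m n)).trans (hm i), (hanti i (le_max_right m n)).trans (hn i)]
    _ = φ i (s • x + t • y) := by simp only [map_add, map_smul, smul_eq_mul]

end Simons

section WeakCompactness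

-- The codomain is a dual rather than an arbitrary normed space because the topologies on
-- `StrongDual 𝕜 G` agree only after unfolding, which blocks unification at the bidual.
lemma mem_range_of_forall_norm_sub_le {𝕜 E G : Type*} [NontriviallyNormedField 𝕜]
    [NormedAddCommGroup E] [NormedSpace 𝕜 E] [CompleteSpace E] [SeminormedAddCommGroup G]
    [NormedSpace 𝕜 G] (J : E →ₗᵢ[𝕜] StrongDual 𝕜 G) {Φ : StrongDual 𝕜 G}
    (h : ∀ ε > 0, ∃ x, ‖Φ - J x‖ ≤ ε) : Φ ∈ range J := by
  have hcomplete : IsComplete (range J) := J.isometry.isUniformInducing.isComplete_range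
  refine hcomplete.isClosed.closure_subset (Metric.mem_closure_iff.2 fun ε hε => ?_)
  obtain ⟨x, hx⟩ := h (ε / 2) (half_pos hε)
  rw [← dist_eq_norm] at hx
  exact ⟨J x, mem_range_self x, hx.trans_lt (half_lt_self hε)⟩

variable {𝕜 E F : Type*} [RCLike 𝕜] [NormedAddCommGroup E] [NormedSpace 𝕜 E]
  [NormedAddCommGroup F] [InnerProductSpace 𝕜 F] [CompleteSpace F]

lemma inclusionInDoubleDual_surjective :
    Function.Surjective (NormedSpace.inclusionInDoubleDual 𝕜 F) := by
  intro Φ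
  let ψ : StrongDual 𝕜 F :=
    (starL 𝕜 : 𝕜 ≃L⋆[𝕜] 𝕜).toContinuousLinearMap.comp
      (Φ.comp (InnerProductSpace.toDualMap 𝕜 F).toContinuousLinearMap)
  have hψ : ∀ x, ψ x = star (Φ (InnerProductSpace.toDual 𝕜 F x)) := fun _ => rfl
  refine ⟨(InnerProductSpace.toDual 𝕜 F).symm ψ, ?_⟩
  ext ξ
  obtain ⟨x, rfl⟩ := (InnerProductSpace.toDual 𝕜 F).surjective ξ
  rw [NormedSpace.dual_def, InnerProductSpace.toDual_apply_apply, ← inner_conj_symm,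
    InnerProductSpace.toDual_symm_apply, hψ, starRingEnd_apply, star_star]

variable (𝕜) in
lemma isCompact_toWeakSpace_closedBall (r : ℝ) :
    IsCompact (toWeakSpace 𝕜 F '' Metric.closedBall 0 r) := by
  let : NormedSpace ℝ F := NormedSpace.restrictScalars ℝ 𝕜 F
  rw [← Metric.isClosed_closedBall.closure_eq, (convex_closedBall (0 : F) r).toWeakSpace_closure 𝕜]
  refine NormedSpace.isCompact_closure_of_isBounded 𝕜 F _ ?_ ?_
  · rw [preimage_image_eq _ (toWeakSpace 𝕜 F).injective]
    exact Metric.isBounded_closedBall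
  · exact fun Φ _ => inclusionInDoubleDual_surjective Φ

lemma exists_norm_sub_le_of_mem_closure {S K : Set (WeakDual 𝕜 E)} {r : ℝ} (hK : IsCompact K)
    (hSK : ∀ Ψ ∈ S, ∃ k ∈ K, ‖WeakDual.toStrongDual (Ψ - k)‖ ≤ r)
    {Φ : WeakDual 𝕜 E} (hΦ : Φ ∈ closure S) :
    ∃ k ∈ K, ‖WeakDual.toStrongDual (Φ - k)‖ ≤ r := by
  have hsub : S ⊆ K + WeakDual.toStrongDual ⁻¹' Metric.closedBall (0 : StrongDual 𝕜 E) r :=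
    fun Ψ hΨ => by
      obtain ⟨k, hk, hr⟩ := hSK Ψ hΨ
      exact ⟨k, hk, Ψ - k, mem_closedBall_zero_iff.2 hr, add_sub_cancel _ _⟩
  obtain ⟨k, hk, Ψ, hΨ, rfl⟩ := closure_minimal hsub
    (hK.add (WeakDual.isCompact_closedBall 0 r)).isClosed hΦ
  exact ⟨k, hk, by simpa using hΨ⟩

lemma exists_norm_sub_toWeakSpace_le {S K : Set E} {r : ℝ}
    (hK : IsCompact (toWeakSpace 𝕜 E '' K)) (hSK : ∀ x ∈ S, ∃ k ∈ K, ‖x - k‖ ≤ r)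
    {Φ : WeakDual 𝕜 (StrongDual 𝕜 E)}
    (hΦ : Φ ∈ closure (NormedSpace.inclusionInDoubleDualWeak 𝕜 E '' (toWeakSpace 𝕜 E '' S))) :
    ∃ k, ‖WeakDual.toStrongDual
      (Φ - NormedSpace.inclusionInDoubleDualWeak 𝕜 E (toWeakSpace 𝕜 E k))‖ ≤ r := by
  have hJK := hK.image (NormedSpace.inclusionInDoubleDualWeak 𝕜 E).continuous
  obtain ⟨_, ⟨_, ⟨k, -, rfl⟩, rfl⟩, hk⟩ := exists_norm_sub_le_of_mem_closure hJK (r := r) (by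
    rintro _ ⟨_, ⟨x, hx, rfl⟩, rfl⟩
    obtain ⟨k, hk, hxk⟩ := hSK x hx
    refine ⟨_, mem_image_of_mem _ (mem_image_of_mem _ hk), ?_⟩
    rw [← map_sub, ← map_sub]
    exact (NormedSpace.double_dual_bound 𝕜 E (x - k)).trans hxk) hΦ
  exact ⟨k, hk⟩

lemma isCompact_closure_of_forall_exists_norm_sub_le [CompleteSpace E] {S : Set E}
    (hS : IsBounded S)
    (h : ∀ ε > 0, ∃ K, IsCompact (toWeakSpace 𝕜 E '' K) ∧ ∀ x ∈ S, ∃ k ∈ K, ‖x - k‖ ≤ ε) :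
    IsCompact (closure (toWeakSpace 𝕜 E '' S)) := by
  refine NormedSpace.isCompact_closure_of_isBounded 𝕜 E _ ?_ fun Φ hΦ => ?_
  · rwa [preimage_image_eq _ (toWeakSpace 𝕜 E).injective]
  obtain ⟨x, hx⟩ := mem_range_of_forall_norm_sub_le
    (NormedSpace.inclusionInDoubleDualLi (E := E) 𝕜) (Φ := WeakDual.toStrongDual Φ) fun ε hε => by
      obtain ⟨K, hK, hSK⟩ := h ε hε
      exact exists_norm_sub_toWeakSpace_le hK hSK hΦ
  exact ⟨toWeakSpace 𝕜 E x, hx⟩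

end WeakCompactness

section DunfordPettis

variable {Ω 𝕜 F : Type*} [MeasurableSpace Ω] {μ : Measure Ω} [IsFiniteMeasure μ] [RCLike 𝕜]
  [NormedAddCommGroup F] [InnerProductSpace 𝕜 F]

variable (𝕜 F μ) in
/-- The inclusion `L² → L¹` over a finite measure, encoded as Hölder multiplication by the
constant `1 ∈ L²` so that its continuity comes from Hölder's inequality. -/
noncomputable def lpTwoToLpOne : Lp F 2 μ →L[𝕜] Lp F 1 μ :=
  (ContinuousLinearMap.lsmul 𝕜 𝕜).holderL μ 2 2 1 (Lp.const 2 μ 1)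

lemma coeFn_lpTwoToLpOne (f : Lp F 2 μ) : lpTwoToLpOne 𝕜 F μ f =ᵐ[μ] f := by
  filter_upwards [(ContinuousLinearMap.lsmul 𝕜 𝕜 : 𝕜 →L[𝕜] F →L[𝕜] F).coeFn_holder (r := 1)
    (Lp.const 2 μ (1 : 𝕜)) f, Lp.coeFn_const 2 μ (1 : 𝕜)] with ω hω h1
  rw [lpTwoToLpOne, ContinuousLinearMap.holderL_apply_apply, hω, h1]
  simp

lemma exists_norm_sub_lpTwoToLpOne_le {S : Set (Lp F 1 μ)}
    (hS : UniformIntegrable (fun f : S => ((f : Lp F 1 μ) : Ω → F)) 1 μ) {ε : ℝ} (hε : 0 < ε) :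
    ∃ r, ∀ f ∈ S, ∃ g : Lp F 2 μ, ‖g‖ ≤ r ∧ ‖f - lpTwoToLpOne 𝕜 F μ g‖ ≤ ε := by
  obtain ⟨C, hC⟩ := hS.spec one_ne_zero ENNReal.one_ne_top hε
  refine ⟨measureUnivNNReal μ ^ (2⁻¹ : ℝ) * C, fun f hf => ?_⟩
  let A : Set Ω := {ω | C ≤ ‖f ω‖₊}
  have hA : MeasurableSet A :=
    measurableSet_le measurable_const (Lp.stronglyMeasurable f).nnnorm.measurable
  have hbound : ∀ ω, ‖Aᶜ.indicator f ω‖ ≤ C := fun ω => by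
    by_cases hω : ω ∈ A
    · simp [hω]
    · rw [indicator_of_mem (mem_compl hω)]
      exact (not_le.1 hω).le
  have hmem : MemLp (Aᶜ.indicator f) 2 μ :=
    MemLp.of_bound ((Lp.aestronglyMeasurable f).indicator hA.compl) C (ae_of_all _ hbound)
  let g : Lp F 2 μ := hmem.toLp _
  refine ⟨g, ?_, ?_⟩
  · have hae : ∀ᵐ ω ∂μ, ‖g ω‖ ≤ C := by
      filter_upwards [hmem.coeFn_toLp] with ω hω
      rw [hω]
      exact hbound ω
    exact (Lp.norm_le_of_ae_bound C.2 hae).trans_eq (by simp [measureUnivNNReal])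
  · have hae : ⇑(f - lpTwoToLpOne 𝕜 F μ g) =ᵐ[μ] A.indicator f := by
      filter_upwards [Lp.coeFn_sub f (lpTwoToLpOne 𝕜 F μ g),
        coeFn_lpTwoToLpOne (𝕜 := 𝕜) g, hmem.coeFn_toLp] with ω h₁ h₂ h₃
      rw [h₁, Pi.sub_apply, h₂, h₃, indicator_compl, Pi.sub_apply, sub_sub_cancel]
    rw [Lp.norm_def, eLpNorm_congr_ae hae]
    exact ENNReal.toReal_le_of_le_ofReal hε.le (hC ⟨f, hf⟩)

variable [CompleteSpace F]

variable (𝕜) in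
theorem isCompact_closure_of_uniformIntegrable {S : Set (Lp F 1 μ)}
    (hS : UniformIntegrable (fun f : S => ((f : Lp F 1 μ) : Ω → F)) 1 μ) :
    IsCompact (closure (toWeakSpace 𝕜 (Lp F 1 μ) '' S)) := by
  obtain ⟨C, hC⟩ := hS.2.2
  refine isCompact_closure_of_forall_exists_norm_sub_le
    (isBounded_iff_forall_norm_le.2 ⟨C, fun f hf => ?_⟩) fun ε hε => ?_
  · exact ENNReal.toReal_mono ENNReal.coe_ne_top (hC ⟨f, hf⟩)
  · obtain ⟨r, hr⟩ := exists_norm_sub_lpTwoToLpOne_le (𝕜 := 𝕜) hS hε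
    refine ⟨lpTwoToLpOne 𝕜 F μ '' Metric.closedBall 0 r, ?_, fun f hf => ?_⟩
    · have := (isCompact_toWeakSpace_closedBall 𝕜 (F := Lp F 2 μ) r).image
        (WeakSpace.map (lpTwoToLpOne 𝕜 F μ)).continuous
      rwa [image_image] at this ⊢
    · obtain ⟨g, hg, hfg⟩ := hr f hf
      exact ⟨_, mem_image_of_mem _ (mem_closedBall_zero_iff.2 hg), hfg⟩

end DunfordPettis

section UniformIntegrability

lemma antitone_iSup_add {α : Type*} [CompleteLattice α] (u : ℕ → α) :
    Antitone fun n => ⨆ k, u (k + n) :=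
  antitone_nat_of_succ_le fun n => iSup_le fun k =>
    le_iSup_of_le (k + 1) (by rw [add_right_comm, add_assoc])

variable {Ω : Type*} [MeasurableSpace Ω] {μ : Measure Ω}

lemma tendsto_measure_iUnion_add {A : ℕ → Set Ω} (hA : ∑' n, μ (A n) ≠ ∞) :
    Tendsto (fun n => μ (⋃ k, A (k + n))) atTop (𝓝 0) :=
  tendsto_of_tendsto_of_tendsto_of_le_of_le tendsto_const_nhds
    (ENNReal.tendsto_sum_nat_add (fun n => μ (A n)) hA) (fun _ => zero_le)
    (fun _ => measure_iUnion_le _)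

lemma integral_mul_indicatorConstLp {p : ℝ≥0∞} (f : Ω → ℝ) {B : Set Ω} (hB : MeasurableSet B)
    (hμB : μ B ≠ ∞) :
    ∫ ω, f ω * indicatorConstLp p hB hμB (1 : ℝ) ω ∂μ = ∫ ω in B, f ω ∂μ := by
  rw [← integral_indicator hB]
  refine integral_congr_ae ?_
  filter_upwards [indicatorConstLp_coeFn (p := p) (hs := hB) (hμs := hμB) (c := (1 : ℝ))]
    with ω hω
  simp only [hω, ← indicator_mul_right, mul_one]

lemma eLpNorm_one_indicator_of_nonneg {f : Ω → ℝ} (hf : Integrable f μ)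
    (hf_nonneg : 0 ≤ᵐ[μ] f) {A : Set Ω} (hA : MeasurableSet A) :
    eLpNorm (A.indicator f) 1 μ = ENNReal.ofReal (∫ ω in A, f ω ∂μ) := by
  have hae : ∀ᵐ ω ∂μ.restrict A, ‖f ω‖ₑ = ENNReal.ofReal (f ω) :=
    (ae_restrict_of_ae hf_nonneg).mono fun ω hω => Real.enorm_of_nonneg hω
  rw [eLpNorm_indicator_eq_eLpNorm_restrict hA, eLpNorm_one_eq_lintegral_enorm,
    lintegral_congr_ae hae,
    ofReal_integral_eq_lintegral_ofReal hf.integrableOn (ae_restrict_of_ae hf_nonneg)]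

variable [IsFiniteMeasure μ] {S : Set (Lp ℝ 1 μ)}

lemma exists_forall_setIntegral_lt_of_antitone (hS : ∀ f ∈ S, 0 ≤ f)
    (hmax : ∀ X : Lp ℝ ⊤ μ, ∃ g ∈ S, ∀ f ∈ S, ∫ ω, f ω * X ω ∂μ ≤ ∫ ω, g ω * X ω ∂μ)
    {B : ℕ → Set Ω} (hB : ∀ n, MeasurableSet (B n)) (hanti : Antitone B)
    (hlim : Tendsto (fun n => μ (B n)) atTop (𝓝 0)) {ε : ℝ} (hε : 0 < ε) :
    ∃ n, ∀ f ∈ S, ∫ ω in B n, f ω ∂μ < ε := by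
  let φ : S → StrongDual ℝ (Lp ℝ ⊤ μ) := fun f =>
    (ContinuousLinearMap.mul ℝ ℝ).lpPairing μ 1 ⊤ f
  let e : ℕ → Lp ℝ ⊤ μ := fun n => indicatorConstLp ⊤ (hB n) (measure_ne_top μ _) 1
  have hφ : ∀ f X, φ f X = ∫ ω, (f : Lp ℝ 1 μ) ω * X ω ∂μ := fun _ _ =>
    ContinuousLinearMap.lpPairing_eq_integral _ _ _
  have hφe : ∀ f n, φ f (e n) = ∫ ω in B n, (f : Lp ℝ 1 μ) ω ∂μ := fun f n =>
    (hφ f (e n)).trans (integral_mul_indicatorConstLp _ _ _)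
  have hφmax : ∀ X, ∃ g, ∀ f, φ f X ≤ φ g X := fun X => by
    obtain ⟨g, hg, hle⟩ := hmax X
    exact ⟨⟨g, hg⟩, fun f => by simpa only [hφ] using hle f f.2⟩
  have he : IsBounded (range e) := isBounded_iff_forall_norm_le.2
    ⟨1, forall_mem_range.2 fun n => norm_indicatorConstLp_le.trans (by simp)⟩
  have hint : ∀ f : S, Integrable (f : Lp ℝ 1 μ) μ := fun f => L1.integrable_coeFn f.1
  have hφanti : ∀ f, Antitone fun n => φ f (e n) := fun f m n hmn => by
    simp only [hφe]
    exact setIntegral_mono_set (hint f).integrableOn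
      (ae_restrict_of_ae ((Lp.coeFn_nonneg _).2 (hS f f.2))) (hanti hmn).eventuallyLE
  have hφlim : ∀ f, ∀ᶠ n in atTop, φ f (e n) ≤ ε / 2 := fun f => by
    simp only [hφe]
    exact ((hint f).tendsto_setIntegral_nhds_zero hlim).eventually_le_const (half_pos hε)
  obtain ⟨n, hn⟩ := exists_forall_lt_of_antitone hφmax he hφanti (half_lt_self hε) hφlim
  exact ⟨n, fun f hf => hφe ⟨f, hf⟩ n ▸ hn ⟨f, hf⟩⟩

lemma exists_forall_setIntegral_le (hS : ∀ f ∈ S, 0 ≤ f)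
    (hmax : ∀ X : Lp ℝ ⊤ μ, ∃ g ∈ S, ∀ f ∈ S, ∫ ω, f ω * X ω ∂μ ≤ ∫ ω, g ω * X ω ∂μ)
    {ε : ℝ} (hε : 0 < ε) :
    ∃ δ > 0, ∀ f ∈ S, ∀ A, MeasurableSet A → μ A ≤ ENNReal.ofReal δ →
      ∫ ω in A, f ω ∂μ ≤ ε := by
  by_contra! hcon
  choose f hf A hA hμA hfA using fun n : ℕ => hcon ((1 / 2) ^ n) (by positivity)
  have hsum : ∑' n, μ (A n) ≠ ∞ :=
    ne_top_of_le_ne_top summable_geometric_two.tsum_ofReal_ne_top (ENNReal.tsum_le_tsum hμA)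
  obtain ⟨n, hn⟩ := exists_forall_setIntegral_lt_of_antitone hS hmax
    (fun n => MeasurableSet.iUnion fun k => hA (k + n)) (antitone_iSup_add A)
    (tendsto_measure_iUnion_add hsum) hε
  have hmono : ∫ ω in A n, f n ω ∂μ ≤ ∫ ω in ⋃ k, A (k + n), f n ω ∂μ :=
    setIntegral_mono_set (L1.integrable_coeFn _).integrableOn
      (ae_restrict_of_ae ((Lp.coeFn_nonneg _).2 (hS _ (hf n))))
      (subset_iUnion_of_subset 0 (by rw [zero_add])).eventuallyLE
  exact (hfA n).not_ge (hmono.trans (hn _ (hf n)).le)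

theorem uniformIntegrable_of_forall_exists_max (hS : ∀ f ∈ S, 0 ≤ f)
    (hmax : ∀ X : Lp ℝ ⊤ μ, ∃ g ∈ S, ∀ f ∈ S, ∫ ω, f ω * X ω ∂μ ≤ ∫ ω, g ω * X ω ∂μ) :
    UniformIntegrable (fun f : S => ((f : Lp ℝ 1 μ) : Ω → ℝ)) 1 μ := by
  have heLpNorm : ∀ (f : S) {A : Set Ω}, MeasurableSet A →
      eLpNorm (A.indicator (f : Lp ℝ 1 μ)) 1 μ =
        ENNReal.ofReal (∫ ω in A, (f : Lp ℝ 1 μ) ω ∂μ) := fun f A hA =>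
    eLpNorm_one_indicator_of_nonneg (L1.integrable_coeFn _)
      ((Lp.coeFn_nonneg _).2 (hS f f.2)) hA
  refine ⟨fun f => Lp.aestronglyMeasurable _, fun ε hε => ?_, ?_⟩
  · obtain ⟨δ, hδ, hδε⟩ := exists_forall_setIntegral_le hS hmax hε
    refine ⟨δ, hδ, fun f A hA hμA => ?_⟩
    rw [heLpNorm f hA]
    exact ENNReal.ofReal_le_ofReal (hδε f f.2 A hA hμA)
  · obtain ⟨g, -, hg⟩ := hmax (indicatorConstLp ⊤ .univ (measure_ne_top μ _) 1)
    simp only [integral_mul_indicatorConstLp] at hg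
    refine ⟨(∫ ω in univ, g ω ∂μ).toNNReal, fun f => ?_⟩
    refine (indicator_univ ((f : Lp ℝ 1 μ) : Ω → ℝ) ▸ heLpNorm f .univ).trans_le ?_
    exact ENNReal.ofReal_le_ofReal (hg f f.2)

end UniformIntegrability

theorem weakly_compact_of_sup_attained_general {Ω : Type*} [MeasurableSpace Ω]
    {μ : Measure Ω} [IsFiniteMeasure μ] (H : Set (Lp ℝ 1 μ)) (hnonneg : ∀ f ∈ H, 0 ≤ f)
    (hclosed : IsClosed (toWeakSpace ℝ (Lp ℝ 1 μ) '' H))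
    (hattain : ∀ X : Lp ℝ ⊤ μ, ∃ g ∈ H, ∀ f ∈ H,
      ∫ ω, -((f : Ω → ℝ) ω * (X : Ω → ℝ) ω) ∂μ ≤
        ∫ ω, -((g : Ω → ℝ) ω * (X : Ω → ℝ) ω) ∂μ) :
    IsCompact (toWeakSpace ℝ (Lp ℝ 1 μ) '' H) := by
  have hneg : ∀ (f : Lp ℝ 1 μ) (X : Lp ℝ ⊤ μ),
      ∫ ω, -(f ω * (↑(-X) : Ω → ℝ) ω) ∂μ = ∫ ω, f ω * X ω ∂μ := fun f X =>
    integral_congr_ae ((Lp.coeFn_neg X).mono fun ω hω => by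
      simp only [hω, Pi.neg_apply, mul_neg, neg_neg])
  have hmax : ∀ X : Lp ℝ ⊤ μ, ∃ g ∈ H, ∀ f ∈ H, ∫ ω, f ω * X ω ∂μ ≤ ∫ ω, g ω * X ω ∂μ :=
    fun X => by simpa only [hneg] using hattain (-X)
  rw [← hclosed.closure_eq]
  exact isCompact_closure_of_uniformIntegrable ℝ
    (uniformIntegrable_of_forall_exists_max hnonneg hmax)

/-- James-type theorem: if `H` is a convex, weakly closed set of densities in `L¹`
and for every `X ∈ L∞` the supremum `sup_{f∈H} E[−fX]` is attained, then `H` is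
weakly compact. -/
theorem weakly_compact_of_sup_attained {Ω : Type*} [MeasurableSpace Ω]
    {μ : Measure Ω} [IsProbabilityMeasure μ]
    (H : Set (Lp ℝ 1 μ)) (hHne : H.Nonempty) (hconv : Convex ℝ H)
    (hdens : ∀ f ∈ H, 0 ≤ f ∧ ∫ ω, (f : Ω → ℝ) ω ∂μ = 1)
    (hclosed : IsClosed (toWeakSpace ℝ (Lp ℝ 1 μ) '' H))
    (hattain : ∀ X : Lp ℝ ⊤ μ, ∃ g ∈ H, ∀ f ∈ H,
      ∫ ω, -((f : Ω → ℝ) ω * (X : Ω → ℝ) ω) ∂μ ≤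
        ∫ ω, -((g : Ω → ℝ) ω * (X : Ω → ℝ) ω) ∂μ) :
    IsCompact (toWeakSpace ℝ (Lp ℝ 1 μ) '' H) := by
  exact weakly_compact_of_sup_attained_general H (fun f hf => (hdens f hf).1) hclosed hattain
end

section
/- Let ρ : L∞ → ℝ be a coherent risk measure given by ρ(X) = sup_{f∈H} E[−fX] with H ⊆ L¹₊ a set of densities, and let X ∈ L∞. If g ∈ H attains ρ(X) = E[−gX], then −g belongs to the subgradient of ρ at X, i.e., ρ(X+Y) ≥ ρ(X) + E[−gY] for all Y ∈ L∞. Conversely, if μ ∈ L¹ satisfies ρ(X+Y) ≥ ρ(X) + E[μY] for all Y, then −μ is in the σ(L¹,L∞)-closure of the convex hull of H and ρ(X) = E[μX]. -/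
open MeasureTheory

/-!
The functions `ρ` in question are support functions of sets of densities, read on the dual of `L¹`:
since `(L¹)* = L∞`, the map sending a position `X` to the functional `f ↦ E[-fX]` is onto the dual.
A point `x` is a subgradient of the support function `h` of `s` at `φ` exactly when
`x ∈ closedConvexHull ℝ s` and `h φ = φ x`. Indeed, testing the subgradient inequality in the
direction `-φ` gives `h φ ≤ φ x`, and sublinearity of `h` turns it into `ψ x ≤ h ψ` for all `ψ`,
which is membership in the closed convex hull by Hahn–Banach. By Mazur's theorem the norm and weak
closures of a convex hull coincide.
-/

section SupportFunction

variable {E : Type*} [AddCommGroup E] [Module ℝ E] [TopologicalSpace E]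

/-- The support function `φ ↦ sup_{x ∈ s} φ x` of a set `s`, on the topological dual. It takes the
junk value `0` at functionals that are unbounded above on `s`, and everywhere if `s` is empty. -/
noncomputable def supportFun (s : Set E) (φ : StrongDual ℝ E) : ℝ :=
  sSup (φ '' s)

variable {s : Set E} {φ ψ : StrongDual ℝ E} {x : E} {c : ℝ}

lemma le_supportFun (hφ : BddAbove (φ '' s)) (hx : x ∈ s) : φ x ≤ supportFun s φ :=
  le_csSup hφ (Set.mem_image_of_mem φ hx)

lemma supportFun_le (hs : s.Nonempty) (h : ∀ x ∈ s, φ x ≤ c) : supportFun s φ ≤ c :=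
  csSup_le (hs.image φ) (Set.forall_mem_image.2 h)

lemma supportFun_zero_le (s : Set E) : supportFun s 0 ≤ 0 :=
  Real.sSup_nonpos (Set.forall_mem_image.2 fun _ _ => le_rfl)

lemma supportFun_add_le (hs : s.Nonempty) (hφ : BddAbove (φ '' s)) (hψ : BddAbove (ψ '' s)) :
    supportFun s (φ + ψ) ≤ supportFun s φ + supportFun s ψ :=
  supportFun_le hs fun _ hx => add_le_add (le_supportFun hφ hx) (le_supportFun hψ hx)

lemma le_supportFun_of_mem_closedConvexHull (hφ : BddAbove (φ '' s))
    (hx : x ∈ closedConvexHull ℝ s) : φ x ≤ supportFun s φ :=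
  closedConvexHull_min (t := {y | φ y ≤ supportFun s φ}) (fun _ hy => le_supportFun hφ hy)
    (convex_halfSpace_le φ.isLinear _) (isClosed_le φ.continuous continuous_const) hx

lemma mem_closedConvexHull_of_forall_le_supportFun [IsTopologicalAddGroup E] [ContinuousSMul ℝ E]
    [LocallyConvexSpace ℝ E] (hs : s.Nonempty) (h : ∀ φ : StrongDual ℝ E, φ x ≤ supportFun s φ) :
    x ∈ closedConvexHull ℝ s := by
  by_contra hx
  obtain ⟨φ, u, hφu, hux⟩ :=
    geometric_hahn_banach_closed_point convex_closedConvexHull isClosed_closedConvexHull hx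
  have hsu : supportFun s φ ≤ u :=
    supportFun_le hs fun y hy => (hφu y (subset_closedConvexHull hy)).le
  exact (h φ).not_gt (hsu.trans_lt hux)

/-- The subgradients of a function on the dual of `E` which are given by points of `E` itself,
rather than by general elements of the bidual. -/
def predualSubdifferential (h : StrongDual ℝ E → ℝ) (φ : StrongDual ℝ E) : Set E :=
  {x | ∀ ψ : StrongDual ℝ E, h φ + ψ x ≤ h (φ + ψ)}

theorem mem_predualSubdifferential_supportFun_iff [IsTopologicalAddGroup E] [ContinuousSMul ℝ E]
    [LocallyConvexSpace ℝ E] (hs : s.Nonempty)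
    (hbdd : ∀ φ : StrongDual ℝ E, BddAbove (φ '' s)) :
    x ∈ predualSubdifferential (supportFun s) φ ↔
      x ∈ closedConvexHull ℝ s ∧ supportFun s φ = φ x := by
  constructor
  · intro hx
    have hle : ∀ ψ : StrongDual ℝ E, ψ x ≤ supportFun s ψ := fun ψ => by
      linarith [hx ψ, supportFun_add_le hs (hbdd φ) (hbdd ψ)]
    have hge : supportFun s φ - φ x ≤ 0 :=
      calc supportFun s φ - φ x = supportFun s φ + (-φ) x := sub_eq_add_neg _ _
        _ ≤ supportFun s (φ + -φ) := hx (-φ)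
        _ = supportFun s 0 := by rw [add_neg_cancel]
        _ ≤ 0 := supportFun_zero_le s
    exact ⟨mem_closedConvexHull_of_forall_le_supportFun hs hle,
      le_antisymm (sub_nonpos.1 hge) (hle φ)⟩
  · rintro ⟨hx, hφx⟩ ψ
    calc supportFun s φ + ψ x = (φ + ψ) x := by rw [hφx, add_apply]
      _ ≤ supportFun s (φ + ψ) := le_supportFun_of_mem_closedConvexHull (hbdd _) hx

end SupportFunction

section DualOfL1

variable {Ω : Type*} [MeasurableSpace Ω] {μ : Measure Ω}

lemma indicatorConstLp_eq_smul_one {p : ENNReal} {s : Set Ω} (hs : MeasurableSet s)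
    (hμs : μ s ≠ ⊤) (c : ℝ) :
    indicatorConstLp p hs hμs c = c • indicatorConstLp p hs hμs (1 : ℝ) := by
  rw [indicatorConstLp, indicatorConstLp, ← MemLp.toLp_const_smul]
  refine MemLp.toLp_congr _ _ (.of_forall fun ω => ?_)
  by_cases h : ω ∈ s <;> simp [h]

lemma continuousLinearMap_ext_indicatorConstLp {p : ENNReal} [Fact (1 ≤ p)] (hp : p ≠ ⊤)
    {F : Type*} [AddCommMonoid F] [Module ℝ F] [TopologicalSpace F] [T2Space F]
    {S T : Lp ℝ p μ →L[ℝ] F}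
    (h : ∀ (s : Set Ω) (hs : MeasurableSet s) (hμs : μ s ≠ ⊤),
      S (indicatorConstLp p hs hμs 1) = T (indicatorConstLp p hs hμs 1)) : S = T := by
  ext f
  induction f using Lp.induction (hp_ne_top := hp) with
  | indicatorConst c hs hμs =>
    rw [Lp.simpleFunc.coe_indicatorConst, indicatorConstLp_eq_smul_one, map_smul, map_smul, h]
  | add _ _ _ hf hg => rw [map_add, map_add, hf, hg]
  | isClosed => exact isClosed_eq S.continuous T.continuous

lemma ae_abs_le_of_forall_abs_setIntegral_le [SigmaFinite μ] {g : Ω → ℝ} {C : ℝ}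
    (hg : ∀ s, MeasurableSet s → μ s < ⊤ → IntegrableOn g s μ)
    (h : ∀ s, MeasurableSet s → μ s < ⊤ → |∫ ω in s, g ω ∂μ| ≤ C * μ.real s) :
    ∀ᵐ ω ∂μ, |g ω| ≤ C := by
  have hC : ∀ s, μ s < ⊤ → IntegrableOn (fun _ => C) s μ := fun s hμs =>
    integrableOn_const hμs.ne
  have hCint : ∀ s, ∫ _ in s, C ∂μ = C * μ.real s := fun s => by
    rw [setIntegral_const, smul_eq_mul, mul_comm]
  have hupper : 0 ≤ᵐ[μ] fun ω => C - g ω :=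
    ae_nonneg_of_forall_setIntegral_nonneg_of_sigmaFinite
      (fun s hs hμs => (hC s hμs).sub (hg s hs hμs)) fun s hs hμs => by
        rw [integral_sub (hC s hμs) (hg s hs hμs), hCint]
        linarith [(abs_le.1 (h s hs hμs)).2]
  have hlower : 0 ≤ᵐ[μ] fun ω => C + g ω :=
    ae_nonneg_of_forall_setIntegral_nonneg_of_sigmaFinite
      (fun s hs hμs => (hC s hμs).add (hg s hs hμs)) fun s hs hμs => by
        rw [integral_add (hC s hμs) (hg s hs hμs), hCint]
        linarith [(abs_le.1 (h s hs hμs)).1]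
  filter_upwards [hupper, hlower] with ω hu hl
  simp only [Pi.zero_apply] at hu hl
  exact abs_le.2 ⟨by linarith, by linarith⟩

variable (μ) in
/-- The natural map `X ↦ (f ↦ E[f X])` from `L∞` to the dual of `L¹`. -/
noncomputable def lInftyToDualL1 : Lp ℝ ⊤ μ →L[ℝ] StrongDual ℝ (Lp ℝ 1 μ) :=
  (ContinuousLinearMap.mul ℝ ℝ).flip.lpPairing μ ⊤ 1

lemma lInftyToDualL1_apply (X : Lp ℝ ⊤ μ) (f : Lp ℝ 1 μ) :
    lInftyToDualL1 μ X f = ∫ ω, f ω * X ω ∂μ :=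
  ContinuousLinearMap.lpPairing_eq_integral _ X f

lemma lInftyToDualL1_indicatorConstLp (X : Lp ℝ ⊤ μ) {s : Set Ω} (hs : MeasurableSet s)
    (hμs : μ s ≠ ⊤) :
    lInftyToDualL1 μ X (indicatorConstLp 1 hs hμs 1) = ∫ ω in s, X ω ∂μ := by
  rw [lInftyToDualL1_apply, ← integral_indicator hs]
  refine integral_congr_ae ?_
  filter_upwards [indicatorConstLp_coeFn (p := 1) (hs := hs) (hμs := hμs) (c := (1 : ℝ))] with ω hω
  by_cases h : ω ∈ s <;> simp [hω, h]

variable [IsFiniteMeasure μ]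

variable (μ) in
/-- The inclusion of `L²` in `L¹` for a finite measure, encoded as multiplication by the constant
function `1 ∈ L²`. -/
noncomputable def l2ToL1 : Lp ℝ 2 μ →L[ℝ] Lp ℝ 1 μ :=
  (ContinuousLinearMap.mul ℝ ℝ).holderL μ 2 2 1 (Lp.const 2 μ 1)

lemma coeFn_l2ToL1 (f : Lp ℝ 2 μ) : l2ToL1 μ f =ᵐ[μ] f := by
  refine ((ContinuousLinearMap.mul ℝ ℝ).coeFn_holder (Lp.const 2 μ 1) f).trans ?_
  filter_upwards [Lp.coeFn_const (p := 2) (μ := μ) (c := (1 : ℝ))] with ω hone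
  rw [hone, Function.const_apply, ContinuousLinearMap.mul_apply', one_mul]

lemma l2ToL1_indicatorConstLp {s : Set Ω} (hs : MeasurableSet s) (hμs : μ s ≠ ⊤) (c : ℝ) :
    l2ToL1 μ (indicatorConstLp 2 hs hμs c) = indicatorConstLp 1 hs hμs c :=
  Lp.ext ((coeFn_l2ToL1 _).trans (indicatorConstLp_coeFn.trans indicatorConstLp_coeFn.symm))

lemma exists_integrable_forall_apply_indicatorConstLp_eq_setIntegral
    (φ : StrongDual ℝ (Lp ℝ 1 μ)) :
    ∃ g : Ω → ℝ, Integrable g μ ∧ ∀ (s : Set Ω) (hs : MeasurableSet s) (hμs : μ s ≠ ⊤),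
      φ (indicatorConstLp 1 hs hμs 1) = ∫ ω in s, g ω ∂μ := by
  -- Riesz representation in the Hilbert space `L²` applies to the restriction of `φ`.
  let g : Lp ℝ 2 μ := (InnerProductSpace.toDual ℝ (Lp ℝ 2 μ)).symm (φ ∘L l2ToL1 μ)
  refine ⟨g, (Lp.memLp g).integrable one_le_two, fun s hs hμs => ?_⟩
  calc φ (indicatorConstLp 1 hs hμs 1)
      = (φ ∘L l2ToL1 μ) (indicatorConstLp 2 hs hμs 1) := by
        rw [ContinuousLinearMap.comp_apply, l2ToL1_indicatorConstLp]
    _ = inner ℝ g (indicatorConstLp 2 hs hμs 1) := InnerProductSpace.toDual_symm_apply.symm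
    _ = ∫ ω in s, g ω ∂μ := by
        rw [real_inner_comm, L2.inner_indicatorConstLp_one hs hμs g]

theorem lInftyToDualL1_surjective : Function.Surjective (lInftyToDualL1 μ) := by
  intro φ
  obtain ⟨g, hg, hφg⟩ := exists_integrable_forall_apply_indicatorConstLp_eq_setIntegral φ
  have hg_le : ∀ᵐ ω ∂μ, |g ω| ≤ ‖φ‖ :=
    ae_abs_le_of_forall_abs_setIntegral_le (fun _ _ _ => hg.integrableOn) fun s hs hμs =>
      calc |∫ ω in s, g ω ∂μ| = ‖φ (indicatorConstLp 1 hs hμs.ne 1)‖ := by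
            rw [hφg, Real.norm_eq_abs]
        _ ≤ ‖φ‖ * ‖indicatorConstLp 1 hs hμs.ne (1 : ℝ)‖ := φ.le_opNorm _
        _ = ‖φ‖ * μ.real s := by
            rw [norm_indicatorConstLp one_ne_zero ENNReal.one_ne_top]
            simp only [norm_one, ENNReal.toReal_one, div_one, Real.rpow_one, one_mul]
  have hg_top : MemLp g ⊤ μ := memLp_top_of_bound hg.aestronglyMeasurable ‖φ‖ hg_le
  refine ⟨hg_top.toLp g, continuousLinearMap_ext_indicatorConstLp ENNReal.one_ne_top
    fun s hs hμs => ?_⟩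
  rw [lInftyToDualL1_indicatorConstLp, hφg]
  exact integral_congr_ae (ae_restrict_of_ae hg_top.coeFn_toLp)

end DualOfL1

section ExpectedLoss

variable {Ω : Type*} [MeasurableSpace Ω] {μ : Measure Ω}

variable (μ) in
/-- The map sending a position `X ∈ L∞` to the functional `f ↦ E[-f X]` on `L¹`, the expected loss
of `X` under the density `f`. -/
noncomputable def expectedLoss : Lp ℝ ⊤ μ →L[ℝ] StrongDual ℝ (Lp ℝ 1 μ) :=
  -lInftyToDualL1 μ

lemma expectedLoss_apply (X : Lp ℝ ⊤ μ) (f : Lp ℝ 1 μ) :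
    expectedLoss μ X f = ∫ ω, -(f ω * X ω) ∂μ := by
  rw [integral_neg, ← lInftyToDualL1_apply]
  rfl

lemma expectedLoss_apply_neg (X : Lp ℝ ⊤ μ) (f : Lp ℝ 1 μ) :
    expectedLoss μ X (-f) = ∫ ω, f ω * X ω ∂μ := by
  rw [map_neg, expectedLoss_apply, integral_neg, neg_neg]

lemma integral_coeFn_neg_mul (f : Lp ℝ 1 μ) (X : Lp ℝ ⊤ μ) :
    ∫ ω, (-f : Lp ℝ 1 μ) ω * X ω ∂μ = ∫ ω, -(f ω * X ω) ∂μ := by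
  rw [← expectedLoss_apply_neg, neg_neg, expectedLoss_apply]

lemma expectedLoss_surjective [IsFiniteMeasure μ] : Function.Surjective (expectedLoss μ) :=
  neg_surjective.comp lInftyToDualL1_surjective

lemma iSup_integral_eq_supportFun (H : Set (Lp ℝ 1 μ)) (X : Lp ℝ ⊤ μ) :
    ⨆ f : H, ∫ ω, -(f.1 ω * X ω) ∂μ = supportFun H (expectedLoss μ X) := by
  simp only [supportFun, sSup_image', expectedLoss_apply]

lemma norm_eq_integral_of_nonneg {f : Lp ℝ 1 μ} (hf : 0 ≤ f) : ‖f‖ = ∫ ω, f ω ∂μ := by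
  rw [L1.norm_eq_integral_norm]
  refine integral_congr_ae ?_
  filter_upwards [(Lp.coeFn_nonneg f).2 hf] with ω hω
  exact Real.norm_of_nonneg hω

lemma bddAbove_expectedLoss_of_isBounded {H : Set (Lp ℝ 1 μ)} (hH : Bornology.IsBounded H)
    (X : Lp ℝ ⊤ μ) : BddAbove (Set.range fun f : H => ∫ ω, -(f.1 ω * X ω) ∂μ) := by
  simp only [← expectedLoss_apply, ← Set.image_eq_range]
  exact ((expectedLoss μ X).lipschitz.isBounded_image hH).bddAbove

end ExpectedLoss

theorem coherent_subgradient_characterization_general {Ω : Type*} [MeasurableSpace Ω]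
    {μ : Measure Ω} [IsFiniteMeasure μ] (H : Set (Lp ℝ 1 μ)) (hHne : H.Nonempty)
    (hbdd : ∀ X : Lp ℝ ⊤ μ, BddAbove (Set.range fun f : H => ∫ ω, -(f.1 ω * X ω) ∂μ))
    (ρ : Lp ℝ ⊤ μ → ℝ) (hρ : ∀ X : Lp ℝ ⊤ μ, ρ X = ⨆ f : H, ∫ ω, -(f.1 ω * X ω) ∂μ)
    (X : Lp ℝ ⊤ μ) (μ' : Lp ℝ 1 μ) :
    (∀ Y : Lp ℝ ⊤ μ, ρ X + ∫ ω, μ' ω * Y ω ∂μ ≤ ρ (X + Y)) ↔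
      toWeakSpace ℝ (Lp ℝ 1 μ) (-μ') ∈
        closure (toWeakSpace ℝ (Lp ℝ 1 μ) '' (convexHull ℝ H)) ∧
      ρ X = ∫ ω, μ' ω * X ω ∂μ := by
  have hbdd' : ∀ φ : StrongDual ℝ (Lp ℝ 1 μ), BddAbove (φ '' H) :=
    expectedLoss_surjective.forall.2 fun Y => by
      simpa only [← expectedLoss_apply, ← Set.image_eq_range] using hbdd Y
  rw [← (convex_convexHull ℝ H).toWeakSpace_closure ℝ, ← closedConvexHull_eq_closure_convexHull,
    (toWeakSpace ℝ (Lp ℝ 1 μ)).injective.mem_set_image]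
  simp only [hρ, iSup_integral_eq_supportFun, ← expectedLoss_apply_neg, map_add]
  rw [← mem_predualSubdifferential_supportFun_iff hHne hbdd', predualSubdifferential,
    Set.mem_ofPred_eq, expectedLoss_surjective.forall]

/-- Subgradient characterization for a coherent risk measure
`ρ(X) = sup_{f∈H} E[−fX]`. If `g ∈ H` attains the supremum at `X`, then `−g`
is a subgradient of `ρ` at `X`. Conversely (for `H` convex and weakly closed),
any subgradient `μ'` of `ρ` at `X` satisfies that `−μ'` lies in the weak
closure of the convex hull of `H` and `ρ(X) = E[μ'X]`. -/
theorem coherent_subgradient_characterization {Ω : Type*} [MeasurableSpace Ω]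
    {μ : Measure Ω} [IsProbabilityMeasure μ]
    (H : Set (Lp ℝ 1 μ)) (hHne : H.Nonempty)
    (hdens : ∀ f ∈ H, 0 ≤ f ∧ ∫ ω, (f : Ω → ℝ) ω ∂μ = 1)
    (ρ : Lp ℝ ⊤ μ → ℝ)
    (hρ : ∀ X : Lp ℝ ⊤ μ,
      ρ X = ⨆ f : H, ∫ ω, -((f.1 : Ω → ℝ) ω * (X : Ω → ℝ) ω) ∂μ)
    (X : Lp ℝ ⊤ μ) :
    (∀ g ∈ H, ρ X = ∫ ω, -((g : Ω → ℝ) ω * (X : Ω → ℝ) ω) ∂μ →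
      ∀ Y : Lp ℝ ⊤ μ,
        ρ X + ∫ ω, -((g : Ω → ℝ) ω * (Y : Ω → ℝ) ω) ∂μ ≤ ρ (X + Y)) ∧
    (Convex ℝ H → IsClosed (toWeakSpace ℝ (Lp ℝ 1 μ) '' H) →
      ∀ μ' : Lp ℝ 1 μ,
        (∀ Y : Lp ℝ ⊤ μ,
          ρ X + ∫ ω, (μ' : Ω → ℝ) ω * (Y : Ω → ℝ) ω ∂μ ≤ ρ (X + Y)) →
        toWeakSpace ℝ (Lp ℝ 1 μ) (-μ') ∈
          closure (toWeakSpace ℝ (Lp ℝ 1 μ) '' (convexHull ℝ H)) ∧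
        ρ X = ∫ ω, (μ' : Ω → ℝ) ω * (X : Ω → ℝ) ω ∂μ) := by
  have hbounded : Bornology.IsBounded H := isBounded_iff_forall_norm_le.2
    ⟨1, fun f hf => ((norm_eq_integral_of_nonneg (hdens f hf).1).trans (hdens f hf).2).le⟩
  have hsubgradient := coherent_subgradient_characterization_general H hHne
    (bddAbove_expectedLoss_of_isBounded hbounded) ρ hρ X
  refine ⟨fun g hg hgX => ?_, fun _ _ μ' => (hsubgradient μ').1⟩
  have hmem : toWeakSpace ℝ (Lp ℝ 1 μ) (- -g) ∈
      closure (toWeakSpace ℝ (Lp ℝ 1 μ) '' (convexHull ℝ H)) := by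
    rw [neg_neg]
    exact subset_closure (Set.mem_image_of_mem _ (subset_convexHull ℝ H hg))
  simpa only [integral_coeFn_neg_mul] using
    (hsubgradient (-g)).2 ⟨hmem, hgX.trans (integral_coeFn_neg_mul g X).symm⟩
end
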